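/- Let (A,Δ_A,ε_A) and (B,Δ_B,ε_B) be counital coassociative k-coalgebras and let τ : B⊗A → A⊗B be a bijective k-linear map. Then (A⊗B, Δ_{A⊗_τ B}, ε_{A⊗_τ B}) is a counital coassociative k-coalgebra if and only if both of the following hold: (i) (ε_A⊗1_B)∘τ = (canonical isomorphism B⊗k ≅ k⊗B)∘(1_B⊗ε_A) and (1_A⊗ε_B)∘τ = (canonical isomorphism k⊗A ≅ A⊗k)∘(ε_B⊗1_A); (ii) (Δ_A⊗Δ_B)∘τ = (1_A⊗τ⊗1_B)∘(τ⊗τ)∘(1_B⊗τ⊗1_A)∘(Δ_B⊗Δ_A). -/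

import Mathlib

open scoped TensorProduct

namespace TTP

section Defs

variable (k : Type*) [Field k]

section MidMap

variable {X P Q Y R S : Type*}
  [AddCommGroup X] [Module k X] [AddCommGroup P] [Module k P]
  [AddCommGroup Q] [Module k Q] [AddCommGroup Y] [Module k Y]
  [AddCommGroup R] [Module k R] [AddCommGroup S] [Module k S]

/-- The map `1_X ⊗ f ⊗ 1_Y` (with the canonical reassociations). -/
noncomputable def midMap (f : P ⊗[k] Q →ₗ[k] R ⊗[k] S) :
    (X ⊗[k] P) ⊗[k] (Q ⊗[k] Y) →ₗ[k] (X ⊗[k] R) ⊗[k] (S ⊗[k] Y) :=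
  (TensorProduct.assoc k (X ⊗[k] R) S Y).toLinearMap
    ∘ₗ TensorProduct.map (TensorProduct.assoc k X R S).symm.toLinearMap LinearMap.id
    ∘ₗ TensorProduct.map (TensorProduct.map LinearMap.id f) LinearMap.id
    ∘ₗ TensorProduct.map (TensorProduct.assoc k X P Q).toLinearMap LinearMap.id
    ∘ₗ (TensorProduct.assoc k (X ⊗[k] P) Q Y).symm.toLinearMap

end MidMap

variable {A B : Type*} [AddCommGroup A] [Module k A] [AddCommGroup B] [Module k B]

/-- `(A, mul, unit)` is a unital associative `k`-algebra (diagrammatically). -/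
def IsUnitalAssoc (mul : A ⊗[k] A →ₗ[k] A) (unit : k →ₗ[k] A) : Prop :=
  mul ∘ₗ TensorProduct.map unit LinearMap.id ∘ₗ (TensorProduct.lid k A).symm.toLinearMap
      = LinearMap.id
  ∧ mul ∘ₗ TensorProduct.map LinearMap.id unit ∘ₗ (TensorProduct.rid k A).symm.toLinearMap
      = LinearMap.id
  ∧ mul ∘ₗ TensorProduct.map mul LinearMap.id
      = mul ∘ₗ TensorProduct.map LinearMap.id mul ∘ₗ (TensorProduct.assoc k A A A).toLinearMap

/-- `(A, comul, counit)` is a counital coassociative `k`-coalgebra (diagrammatically). -/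
def IsCounitalCoassoc (comul : A →ₗ[k] A ⊗[k] A) (counit : A →ₗ[k] k) : Prop :=
  (TensorProduct.lid k A).toLinearMap ∘ₗ TensorProduct.map counit LinearMap.id ∘ₗ comul
      = LinearMap.id
  ∧ (TensorProduct.rid k A).toLinearMap ∘ₗ TensorProduct.map LinearMap.id counit ∘ₗ comul
      = LinearMap.id
  ∧ TensorProduct.map comul LinearMap.id ∘ₗ comul
      = (TensorProduct.assoc k A A A).symm.toLinearMap
          ∘ₗ TensorProduct.map LinearMap.id comul ∘ₗ comul

/-- `τ : B ⊗ A → A ⊗ B` is a twisting map for the algebras `A` and `B`: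
it is compatible with both units and with both multiplications. -/
def IsTwisting (mulA : A ⊗[k] A →ₗ[k] A) (unitA : k →ₗ[k] A)
    (mulB : B ⊗[k] B →ₗ[k] B) (unitB : k →ₗ[k] B)
    (τ : B ⊗[k] A →ₗ[k] A ⊗[k] B) : Prop :=
  τ ∘ₗ TensorProduct.map LinearMap.id unitA
      = TensorProduct.map unitA LinearMap.id ∘ₗ (TensorProduct.comm k B k).toLinearMap
  ∧ τ ∘ₗ TensorProduct.map unitB LinearMap.id
      = TensorProduct.map LinearMap.id unitB ∘ₗ (TensorProduct.comm k k A).toLinearMap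
  ∧ τ ∘ₗ TensorProduct.map mulB mulA
      = TensorProduct.map mulA mulB ∘ₗ midMap k τ ∘ₗ TensorProduct.map τ τ ∘ₗ midMap k τ

/-- The multiplication `(∇_A ⊗ ∇_B) ∘ (1 ⊗ τ ⊗ 1)` of the twisted tensor product. -/
noncomputable def tMul (mulA : A ⊗[k] A →ₗ[k] A) (mulB : B ⊗[k] B →ₗ[k] B)
    (τ : B ⊗[k] A →ₗ[k] A ⊗[k] B) :
    (A ⊗[k] B) ⊗[k] (A ⊗[k] B) →ₗ[k] A ⊗[k] B :=
  TensorProduct.map mulA mulB ∘ₗ midMap k τ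

/-- The unit `(η_A ⊗ η_B) ∘ (k ≅ k ⊗ k)` of the twisted tensor product. -/
noncomputable def tUnit (unitA : k →ₗ[k] A) (unitB : k →ₗ[k] B) : k →ₗ[k] A ⊗[k] B :=
  TensorProduct.map unitA unitB ∘ₗ (TensorProduct.lid k k).symm.toLinearMap

/-- The comultiplication `(1 ⊗ τ⁻¹ ⊗ 1) ∘ (Δ_A ⊗ Δ_B)` of the twisted tensor product. -/
noncomputable def tComul (comulA : A →ₗ[k] A ⊗[k] A) (comulB : B →ₗ[k] B ⊗[k] B)
    (τinv : A ⊗[k] B →ₗ[k] B ⊗[k] A) :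
    A ⊗[k] B →ₗ[k] (A ⊗[k] B) ⊗[k] (A ⊗[k] B) :=
  midMap k τinv ∘ₗ TensorProduct.map comulA comulB

/-- The counit `(k ⊗ k ≅ k) ∘ (ε_A ⊗ ε_B)` of the twisted tensor product. -/
noncomputable def tCounit (counitA : A →ₗ[k] k) (counitB : B →ₗ[k] k) :
    A ⊗[k] B →ₗ[k] k :=
  (TensorProduct.lid k k).toLinearMap ∘ₗ TensorProduct.map counitA counitB

/-- Compatibility of `τ` with the counits (diagram (5) of the paper). -/
def CounitCompat (counitA : A →ₗ[k] k) (counitB : B →ₗ[k] k)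
    (τ : B ⊗[k] A →ₗ[k] A ⊗[k] B) : Prop :=
  TensorProduct.map counitA LinearMap.id ∘ₗ τ
      = (TensorProduct.comm k B k).toLinearMap ∘ₗ TensorProduct.map LinearMap.id counitA
  ∧ TensorProduct.map LinearMap.id counitB ∘ₗ τ
      = (TensorProduct.comm k k A).toLinearMap ∘ₗ TensorProduct.map counitB LinearMap.id

/-- Compatibility of `τ` with the comultiplications (diagram (6) of the paper):
`(Δ_A ⊗ Δ_B)∘τ = (1⊗τ⊗1)∘(τ⊗τ)∘(1⊗τ⊗1)∘(Δ_B ⊗ Δ_A)`. -/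
def ComulCompat (comulA : A →ₗ[k] A ⊗[k] A) (comulB : B →ₗ[k] B ⊗[k] B)
    (τ : B ⊗[k] A →ₗ[k] A ⊗[k] B) : Prop :=
  TensorProduct.map comulA comulB ∘ₗ τ
      = midMap k τ ∘ₗ TensorProduct.map τ τ ∘ₗ midMap k τ ∘ₗ TensorProduct.map comulB comulA

/-- `(f ⊗ 1_B) ∘ τ = (1_A ⊗ τ) ∘ (τ ⊗ 1_A) ∘ (1_B ⊗ f)` for `f : A → A ⊗ A`. -/
def MidACompat (f : A →ₗ[k] A ⊗[k] A) (τ : B ⊗[k] A →ₗ[k] A ⊗[k] B) : Prop :=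
  TensorProduct.map f LinearMap.id ∘ₗ τ
    = (TensorProduct.assoc k A A B).symm.toLinearMap
      ∘ₗ TensorProduct.map LinearMap.id τ
      ∘ₗ (TensorProduct.assoc k A B A).toLinearMap
      ∘ₗ TensorProduct.map τ LinearMap.id
      ∘ₗ (TensorProduct.assoc k B A A).symm.toLinearMap
      ∘ₗ TensorProduct.map LinearMap.id f

/-- `(1_A ⊗ g) ∘ τ = (τ ⊗ 1_B) ∘ (1_B ⊗ τ) ∘ (g ⊗ 1_A)` for `g : B → B ⊗ B`. -/
def MidBCompat (g : B →ₗ[k] B ⊗[k] B) (τ : B ⊗[k] A →ₗ[k] A ⊗[k] B) : Prop :=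
  TensorProduct.map LinearMap.id g ∘ₗ τ
    = (TensorProduct.assoc k A B B).toLinearMap
      ∘ₗ TensorProduct.map τ LinearMap.id
      ∘ₗ (TensorProduct.assoc k B A B).symm.toLinearMap
      ∘ₗ TensorProduct.map LinearMap.id τ
      ∘ₗ (TensorProduct.assoc k B B A).toLinearMap
      ∘ₗ TensorProduct.map g LinearMap.id

/-- `(A, mul, unit, comul, counit)` is a Frobenius algebra (diagrammatically). -/
def IsFrobenius (mul : A ⊗[k] A →ₗ[k] A) (unit : k →ₗ[k] A)
    (comul : A →ₗ[k] A ⊗[k] A) (counit : A →ₗ[k] k) : Prop :=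
  IsUnitalAssoc k mul unit
  ∧ IsCounitalCoassoc k comul counit
  ∧ comul ∘ₗ mul
      = TensorProduct.map LinearMap.id mul ∘ₗ (TensorProduct.assoc k A A A).toLinearMap
          ∘ₗ TensorProduct.map comul LinearMap.id
  ∧ comul ∘ₗ mul
      = TensorProduct.map mul LinearMap.id ∘ₗ (TensorProduct.assoc k A A A).symm.toLinearMap
          ∘ₗ TensorProduct.map LinearMap.id comul

/-- `(A, mul, unit, comul, counit)` is a bialgebra (diagrammatically). -/
def IsBialgebra (mul : A ⊗[k] A →ₗ[k] A) (unit : k →ₗ[k] A)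
    (comul : A →ₗ[k] A ⊗[k] A) (counit : A →ₗ[k] k) : Prop :=
  IsUnitalAssoc k mul unit
  ∧ IsCounitalCoassoc k comul counit
  ∧ counit ∘ₗ mul = (TensorProduct.lid k k).toLinearMap ∘ₗ TensorProduct.map counit counit
  ∧ comul ∘ₗ unit = TensorProduct.map unit unit ∘ₗ (TensorProduct.lid k k).symm.toLinearMap
  ∧ counit ∘ₗ unit = LinearMap.id
  ∧ comul ∘ₗ mul
      = TensorProduct.map mul mul ∘ₗ midMap k (TensorProduct.comm k A A).toLinearMap
          ∘ₗ TensorProduct.map comul comul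

/-- `(A, mul, unit, comul, counit)` is a Hopf algebra: a bialgebra with an antipode. -/
def IsHopf (mul : A ⊗[k] A →ₗ[k] A) (unit : k →ₗ[k] A)
    (comul : A →ₗ[k] A ⊗[k] A) (counit : A →ₗ[k] k) : Prop :=
  IsBialgebra k mul unit comul counit
  ∧ ∃ S : A →ₗ[k] A,
      mul ∘ₗ TensorProduct.map S LinearMap.id ∘ₗ comul = unit ∘ₗ counit
      ∧ mul ∘ₗ TensorProduct.map LinearMap.id S ∘ₗ comul = unit ∘ₗ counit

/-- `Γ` is a right inverse of the multiplication which is a bimodule morphism,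
witnessing separability of the algebra. -/
def IsSeparableWith (mul : A ⊗[k] A →ₗ[k] A) (Γ : A →ₗ[k] A ⊗[k] A) : Prop :=
  mul ∘ₗ Γ = LinearMap.id
  ∧ Γ ∘ₗ mul ∘ₗ TensorProduct.map LinearMap.id mul
      = TensorProduct.map mul mul
          ∘ₗ (TensorProduct.assoc k A A (A ⊗[k] A)).symm.toLinearMap
          ∘ₗ TensorProduct.map LinearMap.id (TensorProduct.assoc k A A A).toLinearMap
          ∘ₗ TensorProduct.map LinearMap.id (TensorProduct.map Γ LinearMap.id)

/-- The pairing `β` is associative: `β∘(1⊗∇) = β∘(∇⊗1)`. -/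
def PairingAssoc (mul : A ⊗[k] A →ₗ[k] A) (β : A ⊗[k] A →ₗ[k] k) : Prop :=
  β ∘ₗ TensorProduct.map LinearMap.id mul ∘ₗ (TensorProduct.assoc k A A A).toLinearMap
    = β ∘ₗ TensorProduct.map mul LinearMap.id

/-- The pairing `β` is non-degenerate with co-pairing `α`:
`(1⊗β)∘(α⊗1) = 1_A` under the canonical isomorphisms. -/
def PairingNondeg (β : A ⊗[k] A →ₗ[k] k) (α : k →ₗ[k] A ⊗[k] A) : Prop :=
  (TensorProduct.rid k A).toLinearMap
      ∘ₗ TensorProduct.map LinearMap.id β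
      ∘ₗ (TensorProduct.assoc k A A A).toLinearMap
      ∘ₗ TensorProduct.map α LinearMap.id
      ∘ₗ (TensorProduct.lid k A).symm.toLinearMap = LinearMap.id

/-- The pairing `β` is symmetric: `β ∘ σ = β` for the flip `σ`. -/
def PairingSymm (β : A ⊗[k] A →ₗ[k] k) : Prop :=
  β ∘ₗ (TensorProduct.comm k A A).toLinearMap = β

end Defs

end TTP

/-!
Write `s = τ⁻¹ : A ⊗ B → B ⊗ A` and `Δ` for the induced comultiplication; both conditions on `τ` are
equivalent to the same conditions on `s`. Let `p = 1_A ⊗ ε_B` and `q = ε_A ⊗ 1_B` be the projections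
of `A ⊗ B`, and `f ⋆ g = (f ⊗ g) ∘ Δ`.

If `Δ` is coassociative and counital, then `q ⋆ p = s`; contracting this with the counits shows
that `s` is compatible with them. It follows that `p ⋆ q = 1`, `p ⋆ p = Δ_A ∘ p` and
`q ⋆ q = Δ_B ∘ q`, so `s ∘ (p ⋆ q) = q ⋆ p`. By associativity of `⋆`, applying `s` to the middle of
`(p ⋆ p) ⋆ (q ⋆ q)`, then `s ⊗ s`, then `s` to the middle again turns it into
`(q ⋆ q) ⋆ (p ⋆ p) = (Δ_B ⊗ Δ_A) ∘ s`, which is the compatibility with the comultiplications.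

Conversely, contracting the outer factors of that compatibility with the counits gives the two
hexagons relating `s` to `Δ_A` and to `Δ_B` separately. One makes `r = (s ⊗ 1) ∘ (1 ⊗ Δ_B)` a
coaction of `B` on `A ⊗ B`, the other makes it commute, up to `s`, with the coaction `l = Δ_A ⊗ 1`
of `A`. Hence `(1 ⊗ r) ∘ l` is a coaction of the twisted tensor product, and it is `Δ` itself.
-/

namespace TTP

open TensorProduct LinearMap CoassocSimps.TensorProduct

section Calculus

variable {R : Type*} [CommSemiring R] {M N P Q V W X Y : Type*}
  [AddCommMonoid M] [Module R M] [AddCommMonoid N] [Module R N]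
  [AddCommMonoid P] [Module R P] [AddCommMonoid Q] [Module R Q]
  [AddCommMonoid V] [Module R V] [AddCommMonoid W] [Module R W]
  [AddCommMonoid X] [Module R X] [AddCommMonoid Y] [Module R Y]

/-- The contraction `ε ⊗ 1_V : M ⊗ V → R ⊗ V ≅ V` of the left tensor factor. -/
noncomputable def evalLeft (ε : M →ₗ[R] R) : M ⊗[R] V →ₗ[R] V :=
  (TensorProduct.lid R V).toLinearMap ∘ₗ map ε id

/-- The contraction `1_V ⊗ ε : V ⊗ M → V ⊗ R ≅ V` of the right tensor factor. -/
noncomputable def evalRight (ε : M →ₗ[R] R) : V ⊗[R] M →ₗ[R] V :=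
  (TensorProduct.rid R V).toLinearMap ∘ₗ map id ε

@[simp] lemma evalLeft_tmul (ε : M →ₗ[R] R) (m : M) (v : V) :
    evalLeft ε (m ⊗ₜ[R] v) = ε m • v := by
  simp [evalLeft]

@[simp] lemma evalRight_tmul (ε : M →ₗ[R] R) (v : V) (m : M) :
    evalRight ε (v ⊗ₜ[R] m) = ε m • v := by
  simp [evalRight]

lemma evalLeft_comp_map (ε : N →ₗ[R] R) (f : M →ₗ[R] N) (g : V →ₗ[R] W) :
    evalLeft ε ∘ₗ map f g = g ∘ₗ evalLeft (ε ∘ₗ f) := by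
  ext; simp

lemma evalRight_comp_map (ε : N →ₗ[R] R) (f : M →ₗ[R] N) (g : V →ₗ[R] W) :
    evalRight ε ∘ₗ map g f = g ∘ₗ evalRight (ε ∘ₗ f) := by
  ext; simp

lemma evalLeft_comp_assoc (ε : M →ₗ[R] R) :
    evalLeft ε ∘ₗ (TensorProduct.assoc R M V W).toLinearMap = map (evalLeft ε) id := by
  ext; simp [smul_tmul']

lemma map_evalRight_comp_assoc (ε : M →ₗ[R] R) :
    map id (evalRight ε) ∘ₗ (TensorProduct.assoc R V W M).toLinearMap = evalRight ε := by
  ext; simp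

lemma map_evalLeft_comp_assoc (ε : M →ₗ[R] R) :
    map id (evalLeft ε) ∘ₗ (TensorProduct.assoc R V M W).toLinearMap = map (evalRight ε) id := by
  ext; simp [smul_tmul']

/-- The map `Δ ⊗ 1_X : M ⊗ X → P ⊗ (Q ⊗ X)`, with the target bracketed to the right. -/
noncomputable def rTensorSplit (X : Type*) [AddCommMonoid X] [Module R X]
    (Δ : M →ₗ[R] P ⊗[R] Q) : M ⊗[R] X →ₗ[R] P ⊗[R] (Q ⊗[R] X) :=
  (TensorProduct.assoc R P Q X).toLinearMap ∘ₗ map Δ id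

/-- The map `f ⊗ 1_X : M ⊗ (N ⊗ X) → P ⊗ (Q ⊗ X)`, with source and target bracketed to the
right. -/
noncomputable def rTensorPair (X : Type*) [AddCommMonoid X] [Module R X]
    (f : M ⊗[R] N →ₗ[R] P ⊗[R] Q) : M ⊗[R] (N ⊗[R] X) →ₗ[R] P ⊗[R] (Q ⊗[R] X) :=
  rTensorSplit X f ∘ₗ (TensorProduct.assoc R M N X).symm.toLinearMap

lemma rTensorSplit_comp_map (Δ : M →ₗ[R] P ⊗[R] Q) (g : X →ₗ[R] Y) :
    rTensorSplit Y Δ ∘ₗ map id g = map id (map id g) ∘ₗ rTensorSplit X Δ := by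
  simp only [rTensorSplit, coassoc_simps]

lemma rTensorPair_comp_map (f : M ⊗[R] N →ₗ[R] P ⊗[R] Q) (g : X →ₗ[R] Y) :
    rTensorPair Y f ∘ₗ map id (map id g) = map id (map id g) ∘ₗ rTensorPair X f := by
  simp only [rTensorPair, rTensorSplit, coassoc_simps]

lemma rTensorSplit_comp_map_left (Δ : N →ₗ[R] P ⊗[R] Q) (f : M →ₗ[R] N) :
    rTensorSplit X Δ ∘ₗ map f id = rTensorSplit X (Δ ∘ₗ f) := by
  simp only [rTensorSplit, coassoc_simps]

lemma rTensorSplit_comp_assoc (Δ : M →ₗ[R] P ⊗[R] Q) :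
    rTensorSplit (V ⊗[R] X) Δ ∘ₗ (TensorProduct.assoc R M V X).toLinearMap =
      map id (TensorProduct.assoc R Q V X).toLinearMap ∘ₗ rTensorSplit X (rTensorSplit V Δ) := by
  ext m v x
  simp only [rTensorSplit, AlgebraTensorModule.curry_apply, restrictScalars_self, curry_apply,
    coe_comp, LinearEquiv.coe_coe, Function.comp_apply, assoc_tmul, map_tmul, id_apply]
  induction Δ m <;> simp_all [add_tmul]

lemma rTensorSplit_comp_assoc_symm (Δ : M →ₗ[R] P ⊗[R] Q) :
    rTensorSplit X (rTensorSplit V Δ) ∘ₗ (TensorProduct.assoc R M V X).symm.toLinearMap =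
      map id (TensorProduct.assoc R Q V X).symm.toLinearMap ∘ₗ rTensorSplit (V ⊗[R] X) Δ := by
  rw [LinearEquiv.comp_toLinearMap_symm_eq, comp_assoc, rTensorSplit_comp_assoc, map_comp_assoc,
    LinearEquiv.symm_comp, id_comp, map_id, id_comp]

lemma rTensorSplit_comp_rTensorSplit (Δ : M →ₗ[R] P ⊗[R] Q) (F : W →ₗ[R] M ⊗[R] V) :
    rTensorSplit (V ⊗[R] X) Δ ∘ₗ rTensorSplit X F =
      map id (TensorProduct.assoc R Q V X).toLinearMap ∘ₗ
        rTensorSplit X (rTensorSplit V Δ ∘ₗ F) := by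
  rw [rTensorSplit.eq_def X F, ← comp_assoc, rTensorSplit_comp_assoc, comp_assoc,
    rTensorSplit_comp_map_left]

lemma rTensorSplit_assoc_symm_comp (F : W →ₗ[R] M ⊗[R] (N ⊗[R] V)) :
    rTensorSplit X ((TensorProduct.assoc R M N V).symm.toLinearMap ∘ₗ F) =
      (TensorProduct.assoc R M N (V ⊗[R] X)).symm.toLinearMap ∘ₗ
        map id (TensorProduct.assoc R N V X).toLinearMap ∘ₗ rTensorSplit X F := by
  rw [← rTensorSplit_comp_map_left, rTensorSplit.eq_def X F, ← comp_assoc, ← comp_assoc]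
  congr 1
  ext; rfl

lemma rTensorPair_comp_map_assoc (f : M ⊗[R] N →ₗ[R] P ⊗[R] Q) (F : W →ₗ[R] M ⊗[R] (N ⊗[R] V)) :
    rTensorPair (V ⊗[R] X) f ∘ₗ map id (TensorProduct.assoc R N V X).toLinearMap ∘ₗ
        rTensorSplit X F =
      map id (TensorProduct.assoc R Q V X).toLinearMap ∘ₗ
        rTensorSplit X (rTensorPair V f ∘ₗ F) := by
  rw [rTensorPair, comp_assoc, ← rTensorSplit_assoc_symm_comp, rTensorSplit_comp_rTensorSplit,
    rTensorPair, comp_assoc]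

lemma map_rTensorSplit_comp_rTensorSplit (g : V →ₗ[R] P ⊗[R] Q) (F : W →ₗ[R] M ⊗[R] V) :
    map id (rTensorSplit X g) ∘ₗ rTensorSplit X F =
      map id (TensorProduct.assoc R P Q X).toLinearMap ∘ₗ rTensorSplit X (map id g ∘ₗ F) := by
  simp only [rTensorSplit, coassoc_simps]

/-- `ρ : V → M ⊗ V` is a coassociative left coaction of `(M, Δ)`, counital or not. -/
def IsCoaction (Δ : M →ₗ[R] M ⊗[R] M) (ρ : V →ₗ[R] M ⊗[R] V) : Prop :=
  map Δ id ∘ₗ ρ = (TensorProduct.assoc R M M V).symm.toLinearMap ∘ₗ map id ρ ∘ₗ ρ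

lemma isCoaction_iff {Δ : M →ₗ[R] M ⊗[R] M} {ρ : V →ₗ[R] M ⊗[R] V} :
    IsCoaction Δ ρ ↔ rTensorSplit V Δ ∘ₗ ρ = map id ρ ∘ₗ ρ := by
  rw [IsCoaction, LinearEquiv.eq_toLinearMap_symm_comp, rTensorSplit, comp_assoc]

lemma IsCoaction.rTensorSplit {Δ : M →ₗ[R] M ⊗[R] M} {ρ : V →ₗ[R] M ⊗[R] V}
    (h : IsCoaction Δ ρ) (X : Type*) [AddCommMonoid X] [Module R X] :
    IsCoaction Δ (rTensorSplit X ρ) := by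
  rw [isCoaction_iff] at h ⊢
  rw [rTensorSplit_comp_rTensorSplit, h, map_rTensorSplit_comp_rTensorSplit]

lemma evalLeft_comp_rTensorPair (ε : P →ₗ[R] R) (f : M ⊗[R] N →ₗ[R] P ⊗[R] Q) :
    evalLeft ε ∘ₗ rTensorPair X f =
      map (evalLeft ε ∘ₗ f) id ∘ₗ (TensorProduct.assoc R M N X).symm.toLinearMap := by
  rw [rTensorPair, rTensorSplit, ← comp_assoc, ← comp_assoc, evalLeft_comp_assoc, ← map_comp,
    id_comp]

lemma map_id_evalLeft_comp_rTensorPair (ε : Q →ₗ[R] R) (f : M ⊗[R] N →ₗ[R] P ⊗[R] Q) :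
    map id (evalLeft ε) ∘ₗ rTensorPair X f =
      map (evalRight ε ∘ₗ f) id ∘ₗ (TensorProduct.assoc R M N X).symm.toLinearMap := by
  rw [rTensorPair, rTensorSplit, ← comp_assoc, ← comp_assoc, map_evalLeft_comp_assoc, ← map_comp,
    id_comp]

lemma map_id_evalRight_comp_rTensorPair (ε : X →ₗ[R] R) (f : M ⊗[R] N →ₗ[R] P ⊗[R] Q) :
    map id (evalRight ε) ∘ₗ rTensorPair X f = f ∘ₗ map id (evalRight ε) := by
  rw [rTensorPair, rTensorSplit, ← comp_assoc, ← comp_assoc, map_evalRight_comp_assoc,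
    evalRight_comp_map, comp_id, ← map_evalRight_comp_assoc, comp_assoc, comp_assoc,
    LinearEquiv.comp_symm, comp_id]

/-- The convolution-like product `(f ⊗ g) ∘ Δ` of two maps out of a coalgebra `(M, Δ)`. -/
noncomputable def tensorConv (Δ : M →ₗ[R] M ⊗[R] M) (f : M →ₗ[R] V) (g : M →ₗ[R] W) :
    M →ₗ[R] V ⊗[R] W :=
  map f g ∘ₗ Δ

end Calculus

local notation:70 f:71 "⋆[" Δ "]" g:71 => tensorConv Δ f g

section Convolution

variable {R : Type*} [CommSemiring R] {M P Q V W X Y : Type*}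
  [AddCommMonoid M] [Module R M] [AddCommMonoid P] [Module R P] [AddCommMonoid Q] [Module R Q]
  [AddCommMonoid V] [Module R V] [AddCommMonoid W] [Module R W]
  [AddCommMonoid X] [Module R X] [AddCommMonoid Y] [Module R Y]

lemma tensorConv_eq_map_left (Δ : M →ₗ[R] M ⊗[R] M) (f : M →ₗ[R] V) (g : M →ₗ[R] W) :
    f⋆[Δ]g = map f id ∘ₗ map id g ∘ₗ Δ := by
  rw [tensorConv, map_comp_assoc, comp_id, id_comp]

lemma tensorConv_eq_map_right (Δ : M →ₗ[R] M ⊗[R] M) (f : M →ₗ[R] V) (g : M →ₗ[R] W) :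
    f⋆[Δ]g = map id g ∘ₗ map f id ∘ₗ Δ := by
  rw [tensorConv, map_comp_assoc, comp_id, id_comp]

lemma map_comp_tensorConv (Δ : M →ₗ[R] M ⊗[R] M) (f : M →ₗ[R] V) (g : M →ₗ[R] W)
    (F : V →ₗ[R] X) (G : W →ₗ[R] Y) :
    map F G ∘ₗ (f⋆[Δ]g) = (F ∘ₗ f)⋆[Δ](G ∘ₗ g) := by
  rw [tensorConv, tensorConv, map_comp, comp_assoc]

lemma evalLeft_comp_tensorConv (Δ : M →ₗ[R] M ⊗[R] M) (ε : V →ₗ[R] R) (f : M →ₗ[R] V)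
    (g : M →ₗ[R] W) :
    evalLeft ε ∘ₗ (f⋆[Δ]g) = g ∘ₗ evalLeft (ε ∘ₗ f) ∘ₗ Δ := by
  rw [tensorConv, ← comp_assoc, evalLeft_comp_map, comp_assoc]

lemma evalRight_comp_tensorConv (Δ : M →ₗ[R] M ⊗[R] M) (ε : W →ₗ[R] R) (f : M →ₗ[R] V)
    (g : M →ₗ[R] W) :
    evalRight ε ∘ₗ (f⋆[Δ]g) = f ∘ₗ evalRight (ε ∘ₗ g) ∘ₗ Δ := by
  rw [tensorConv, ← comp_assoc, evalRight_comp_map, comp_assoc]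

lemma tensorConv_assoc {Δ : M →ₗ[R] M ⊗[R] M} (hΔ : IsCoaction Δ Δ)
    (f : M →ₗ[R] V) (g : M →ₗ[R] W) (h : M →ₗ[R] X) :
    (TensorProduct.assoc R V W X).toLinearMap ∘ₗ ((f⋆[Δ]g)⋆[Δ]h) = f⋆[Δ](g⋆[Δ]h) := by
  rw [isCoaction_iff] at hΔ
  calc (TensorProduct.assoc R V W X).toLinearMap ∘ₗ ((f⋆[Δ]g)⋆[Δ]h)
      = map f (map g h) ∘ₗ rTensorSplit M Δ ∘ₗ Δ := by
        simp only [tensorConv, rTensorSplit, coassoc_simps]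
    _ = f⋆[Δ](g⋆[Δ]h) := by
        rw [hΔ, map_comp_assoc, comp_id, tensorConv, tensorConv]

lemma tensorConv_assoc_symm {Δ : M →ₗ[R] M ⊗[R] M} (hΔ : IsCoaction Δ Δ)
    (f : M →ₗ[R] V) (g : M →ₗ[R] W) (h : M →ₗ[R] X) :
    (TensorProduct.assoc R V W X).symm.toLinearMap ∘ₗ (f⋆[Δ](g⋆[Δ]h)) =
      (f⋆[Δ]g)⋆[Δ]h := by
  rw [LinearEquiv.toLinearMap_symm_comp_eq, tensorConv_assoc hΔ]

lemma rTensorPair_comp_tensorConv {Δ : M →ₗ[R] M ⊗[R] M} (hΔ : IsCoaction Δ Δ)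
    {φ : V ⊗[R] W →ₗ[R] P ⊗[R] Q} {f : M →ₗ[R] V} {g : M →ₗ[R] W} {f' : M →ₗ[R] P}
    {g' : M →ₗ[R] Q} (h : φ ∘ₗ (f⋆[Δ]g) = f'⋆[Δ]g') (u : M →ₗ[R] X) :
    rTensorPair X φ ∘ₗ (f⋆[Δ](g⋆[Δ]u)) = f'⋆[Δ](g'⋆[Δ]u) := by
  rw [rTensorPair, rTensorSplit, comp_assoc, tensorConv_assoc_symm hΔ, comp_assoc,
    map_comp_tensorConv, h, id_comp, tensorConv_assoc hΔ]

end Convolution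

section MidMap

variable {k : Type*} [Field k] {X P Q Y R S T U : Type*}
  [AddCommGroup X] [Module k X] [AddCommGroup P] [Module k P]
  [AddCommGroup Q] [Module k Q] [AddCommGroup Y] [Module k Y]
  [AddCommGroup R] [Module k R] [AddCommGroup S] [Module k S]
  [AddCommGroup T] [Module k T] [AddCommGroup U] [Module k U]

lemma midMap_eq (f : P ⊗[k] Q →ₗ[k] R ⊗[k] S) :
    midMap k (X := X) (Y := Y) f = (TensorProduct.assoc k X R (S ⊗[k] Y)).symm.toLinearMap ∘ₗ
      map id (rTensorPair Y f) ∘ₗ (TensorProduct.assoc k X P (Q ⊗[k] Y)).toLinearMap := by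
  ext x p q y
  simp only [midMap, rTensorPair, rTensorSplit, AlgebraTensorModule.curry_apply,
    restrictScalars_self, curry_apply, coe_comp, LinearEquiv.coe_coe, Function.comp_apply,
    assoc_tmul, assoc_symm_tmul, map_tmul, id_apply]
  induction f (p ⊗ₜ[k] q) <;> simp_all [add_tmul, tmul_add]

lemma midMap_id : midMap k (X := X) (Y := Y) (id : P ⊗[k] Q →ₗ[k] P ⊗[k] Q) = LinearMap.id := by
  ext; rfl

lemma midMap_comp_midMap (g : R ⊗[k] S →ₗ[k] T ⊗[k] U) (f : P ⊗[k] Q →ₗ[k] R ⊗[k] S) :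
    midMap k (X := X) (Y := Y) g ∘ₗ midMap k f = midMap k (g ∘ₗ f) := by
  simp only [midMap_eq, rTensorPair, rTensorSplit, coassoc_simps]

lemma midMap_comp_tensorConv {M : Type*} [AddCommGroup M] [Module k M]
    {Δ : M →ₗ[k] M ⊗[k] M} (hΔ : IsCoaction Δ Δ)
    {φ : P ⊗[k] Q →ₗ[k] R ⊗[k] S} {f : M →ₗ[k] P} {g : M →ₗ[k] Q} {f' : M →ₗ[k] R}
    {g' : M →ₗ[k] S} (h : φ ∘ₗ (f⋆[Δ]g) = f'⋆[Δ]g')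
    (u : M →ₗ[k] X) (v : M →ₗ[k] Y) :
    midMap k φ ∘ₗ ((u⋆[Δ]f)⋆[Δ](g⋆[Δ]v)) = (u⋆[Δ]f')⋆[Δ](g'⋆[Δ]v) := by
  rw [midMap_eq, comp_assoc, comp_assoc, tensorConv_assoc hΔ, map_comp_tensorConv,
    rTensorPair_comp_tensorConv hΔ h, id_comp, tensorConv_assoc_symm hΔ]

lemma map_evalLeft_id_comp_midMap (ε : X →ₗ[k] k) (f : P ⊗[k] Q →ₗ[k] R ⊗[k] S) :
    map (evalLeft ε) id ∘ₗ midMap k (Y := Y) f = rTensorPair Y f ∘ₗ map (evalLeft ε) id := by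
  rw [midMap_eq, ← evalLeft_comp_assoc, ← evalLeft_comp_assoc, comp_assoc,
    LinearEquiv.comp_symm_assoc, ← comp_assoc, evalLeft_comp_map, comp_id, comp_assoc]

lemma map_evalRight_id_comp_midMap (ε : R →ₗ[k] k) (f : P ⊗[k] Q →ₗ[k] R ⊗[k] S) :
    map (evalRight ε) id ∘ₗ midMap k (X := X) (Y := Y) f =
      map id (evalLeft ε ∘ₗ rTensorPair Y f) ∘ₗ
        (TensorProduct.assoc k X P (Q ⊗[k] Y)).toLinearMap := by
  rw [midMap_eq, ← map_evalLeft_comp_assoc]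
  simp only [coassoc_simps]

lemma map_id_evalLeft_comp_midMap (ε : S →ₗ[k] k) (f : P ⊗[k] Q →ₗ[k] R ⊗[k] S) :
    map id (evalLeft ε) ∘ₗ midMap k (X := X) (Y := Y) f =
      (TensorProduct.assoc k X R Y).symm.toLinearMap ∘ₗ
        map id (map id (evalLeft ε) ∘ₗ rTensorPair Y f) ∘ₗ
          (TensorProduct.assoc k X P (Q ⊗[k] Y)).toLinearMap := by
  simp only [midMap_eq, coassoc_simps]

lemma map_id_evalRight_comp_midMap (ε : Y →ₗ[k] k) (f : P ⊗[k] Q →ₗ[k] R ⊗[k] S) :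
    map id (evalRight ε) ∘ₗ midMap k (X := X) (Y := Y) f =
      (TensorProduct.assoc k X R S).symm.toLinearMap ∘ₗ map id f ∘ₗ
        (TensorProduct.assoc k X P Q).toLinearMap ∘ₗ map id (evalRight ε) := by
  have hassoc := map_map_comp_assoc_symm_eq (id : X →ₗ[k] X) (id : R →ₗ[k] R)
    (evalRight (V := S) ε)
  rw [map_id] at hassoc
  rw [midMap_eq, ← comp_assoc, hassoc, comp_assoc, map_comp_assoc,
    id_comp, map_id_evalRight_comp_rTensorPair]
  simp only [coassoc_simps]

lemma midMap_symm_comp_midMap_comp (e : P ⊗[k] Q ≃ₗ[k] R ⊗[k] S)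
    (g : T →ₗ[k] (X ⊗[k] P) ⊗[k] (Q ⊗[k] Y)) :
    midMap k e.symm.toLinearMap ∘ₗ midMap k e.toLinearMap ∘ₗ g = g := by
  rw [← comp_assoc, midMap_comp_midMap, LinearEquiv.symm_comp, midMap_id, id_comp]

end MidMap

section TwistedCoproduct

variable {k A B : Type*} [Field k] [AddCommGroup A] [Module k A] [AddCommGroup B] [Module k B]
  {ΔA : A →ₗ[k] A ⊗[k] A} {εA : A →ₗ[k] k} {ΔB : B →ₗ[k] B ⊗[k] B} {εB : B →ₗ[k] k}

lemma counitCompat_iff {τ : B ⊗[k] A →ₗ[k] A ⊗[k] B} :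
    CounitCompat k εA εB τ ↔ evalLeft εA ∘ₗ τ = evalRight εA ∧ evalRight εB ∘ₗ τ = evalLeft εB := by
  have hcomm : (TensorProduct.comm k B k).toLinearMap =
      (TensorProduct.lid k B).symm.toLinearMap ∘ₗ (TensorProduct.rid k B).toLinearMap := by
    rw [LinearEquiv.eq_toLinearMap_symm_comp]; ext; simp
  have hcomm' : (TensorProduct.comm k k A).toLinearMap =
      (TensorProduct.rid k A).symm.toLinearMap ∘ₗ (TensorProduct.lid k A).toLinearMap := by
    rw [LinearEquiv.eq_toLinearMap_symm_comp]; ext; simp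
  rw [CounitCompat, hcomm, hcomm', comp_assoc, comp_assoc, LinearEquiv.eq_toLinearMap_symm_comp,
    LinearEquiv.eq_toLinearMap_symm_comp]
  rfl

lemma CounitCompat.symm {τ : B ⊗[k] A ≃ₗ[k] A ⊗[k] B} (h : CounitCompat k εA εB τ.toLinearMap) :
    CounitCompat k εB εA τ.symm.toLinearMap := by
  rw [counitCompat_iff] at h ⊢
  exact ⟨by rw [LinearEquiv.comp_toLinearMap_symm_eq, h.2],
    by rw [LinearEquiv.comp_toLinearMap_symm_eq, h.1]⟩

lemma counitCompat_symm {τ : B ⊗[k] A ≃ₗ[k] A ⊗[k] B} :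
    CounitCompat k εB εA τ.symm.toLinearMap ↔ CounitCompat k εA εB τ.toLinearMap :=
  ⟨CounitCompat.symm (τ := τ.symm), CounitCompat.symm⟩

lemma ComulCompat.symm {τ : B ⊗[k] A ≃ₗ[k] A ⊗[k] B} (h : ComulCompat k ΔA ΔB τ.toLinearMap) :
    ComulCompat k ΔB ΔA τ.symm.toLinearMap := by
  rw [ComulCompat] at h ⊢
  rw [LinearEquiv.comp_toLinearMap_symm_eq]
  simp only [comp_assoc, h, midMap_symm_comp_midMap_comp]
  rw [map_comp_assoc, LinearEquiv.symm_comp, map_id, id_comp, midMap_symm_comp_midMap_comp]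

lemma comulCompat_symm {τ : B ⊗[k] A ≃ₗ[k] A ⊗[k] B} :
    ComulCompat k ΔB ΔA τ.symm.toLinearMap ↔ ComulCompat k ΔA ΔB τ.toLinearMap :=
  ⟨ComulCompat.symm (τ := τ.symm), ComulCompat.symm⟩

variable {s : A ⊗[k] B →ₗ[k] B ⊗[k] A}

/-- The map `(s ⊗ 1_B) ∘ (1_A ⊗ Δ_B) : A ⊗ B → B ⊗ (A ⊗ B)`, which moves one leg of `Δ_B` past `A`;
for compatible `s` it is a coaction of `B` on `A ⊗ B`. -/
noncomputable def twistedCoaction (ΔB : B →ₗ[k] B ⊗[k] B) (s : A ⊗[k] B →ₗ[k] B ⊗[k] A) :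
    A ⊗[k] B →ₗ[k] B ⊗[k] (A ⊗[k] B) :=
  rTensorPair B s ∘ₗ map id ΔB

lemma tComul_eq : tComul k ΔA ΔB s =
    (TensorProduct.assoc k A B (A ⊗[k] B)).symm.toLinearMap ∘ₗ
      map id (twistedCoaction ΔB s) ∘ₗ rTensorSplit B ΔA := by
  simp only [tComul, midMap_eq, twistedCoaction, rTensorSplit, coassoc_simps]

lemma tCounit_eq_comp_evalRight : tCounit k εA εB = εA ∘ₗ evalRight εB := by
  ext; simp [tCounit, mul_comm]

lemma tCounit_eq_comp_evalLeft : tCounit k εA εB = εB ∘ₗ evalLeft εA := by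
  ext; simp [tCounit]

lemma map_evalLeft_id_comp_tComul (hA : evalLeft εA ∘ₗ ΔA = LinearMap.id) :
    map (evalLeft εA) id ∘ₗ tComul k ΔA ΔB s = twistedCoaction ΔB s := by
  rw [tComul, ← comp_assoc, map_evalLeft_id_comp_midMap, comp_assoc, ← map_comp, hA, id_comp,
    twistedCoaction]

lemma map_evalRight_id_comp_tComul (hB : evalLeft εB ∘ₗ ΔB = LinearMap.id)
    (hs : evalLeft εB ∘ₗ s = evalRight εB) :
    map (evalRight εB) id ∘ₗ tComul k ΔA ΔB s = rTensorSplit B ΔA := by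
  have hs' : evalLeft εB ∘ₗ rTensorPair B s = map id (evalLeft εB) := by
    rw [evalLeft_comp_rTensorPair, hs, ← map_evalLeft_comp_assoc, comp_assoc,
      LinearEquiv.comp_symm, comp_id]
  rw [tComul, ← comp_assoc, map_evalRight_id_comp_midMap, hs', comp_assoc, ← comp_assoc,
    map_map_comp_assoc_eq, comp_assoc, ← map_comp, hB, map_id, id_comp, rTensorSplit]

lemma map_id_evalLeft_comp_tComul (hA : evalRight εA ∘ₗ ΔA = LinearMap.id)
    (hs : evalRight εA ∘ₗ s = evalLeft εA) :
    map id (evalLeft εA) ∘ₗ tComul k ΔA ΔB s =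
      (TensorProduct.assoc k A B B).symm.toLinearMap ∘ₗ map id ΔB := by
  have hs' : map id (evalLeft εA) ∘ₗ rTensorPair B s = evalLeft εA := by
    rw [map_id_evalLeft_comp_rTensorPair, hs, ← evalLeft_comp_assoc, comp_assoc,
      LinearEquiv.comp_symm, comp_id]
  rw [tComul, ← comp_assoc, map_id_evalLeft_comp_midMap, hs', map_evalLeft_comp_assoc, comp_assoc,
    ← map_comp, hA, id_comp]

lemma tensorConv_evalLeft_evalRight (hA : evalLeft εA ∘ₗ ΔA = LinearMap.id)
    (hB : evalRight εB ∘ₗ ΔB = LinearMap.id) :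
    tensorConv (tComul k ΔA ΔB s) (evalLeft εA) (evalRight εB) = s := by
  rw [tensorConv_eq_map_right, map_evalLeft_id_comp_tComul hA, twistedCoaction, ← comp_assoc,
    map_id_evalRight_comp_rTensorPair, comp_assoc, ← map_comp, hB, id_comp, map_id, comp_id]

lemma tensorConv_evalRight_evalLeft (hA : evalRight εA ∘ₗ ΔA = LinearMap.id)
    (hB : evalLeft εB ∘ₗ ΔB = LinearMap.id) (hs : evalRight εA ∘ₗ s = evalLeft εA) :
    tensorConv (tComul k ΔA ΔB s) (evalRight εB) (evalLeft εA) = LinearMap.id := by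
  rw [tensorConv_eq_map_left, map_id_evalLeft_comp_tComul hA hs, ← map_evalLeft_comp_assoc,
    comp_assoc, LinearEquiv.comp_symm_assoc, ← map_comp, hB, id_comp, map_id]

lemma tensorConv_evalRight_evalRight (hB : evalLeft εB ∘ₗ ΔB = LinearMap.id)
    (hs : evalLeft εB ∘ₗ s = evalRight εB) :
    tensorConv (tComul k ΔA ΔB s) (evalRight εB) (evalRight εB) = ΔA ∘ₗ evalRight εB := by
  rw [tensorConv_eq_map_right, map_evalRight_id_comp_tComul hB hs, rTensorSplit, ← comp_assoc,
    map_evalRight_comp_assoc, evalRight_comp_map, comp_id]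

lemma tensorConv_evalLeft_evalLeft (hA : evalRight εA ∘ₗ ΔA = LinearMap.id)
    (hs : evalRight εA ∘ₗ s = evalLeft εA) :
    tensorConv (tComul k ΔA ΔB s) (evalLeft εA) (evalLeft εA) = ΔB ∘ₗ evalLeft εA := by
  rw [tensorConv_eq_map_left, map_id_evalLeft_comp_tComul hA hs, ← evalLeft_comp_assoc, comp_assoc,
    LinearEquiv.comp_symm_assoc, evalLeft_comp_map, comp_id]

lemma comulCompat_of_tensorConv {Δ : A ⊗[k] B →ₗ[k] (A ⊗[k] B) ⊗[k] (A ⊗[k] B)}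
    (hΔ : IsCoaction Δ Δ) {p : A ⊗[k] B →ₗ[k] A} {q : A ⊗[k] B →ₗ[k] B}
    (hpp : p⋆[Δ]p = ΔA ∘ₗ p) (hqq : q⋆[Δ]q = ΔB ∘ₗ q)
    (hpq : p⋆[Δ]q = LinearMap.id) (hqp : q⋆[Δ]p = s) : ComulCompat k ΔB ΔA s := by
  have hs : s ∘ₗ (p⋆[Δ]q) = q⋆[Δ]p := by rw [hpq, hqp, comp_id]
  calc map ΔB ΔA ∘ₗ s
      = (q⋆[Δ]q)⋆[Δ](p⋆[Δ]p) := by rw [← hqp, map_comp_tensorConv, hqq, hpp]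
    _ = midMap k s ∘ₗ ((q⋆[Δ]p)⋆[Δ](q⋆[Δ]p)) := (midMap_comp_tensorConv hΔ hs q p).symm
    _ = midMap k s ∘ₗ map s s ∘ₗ ((p⋆[Δ]q)⋆[Δ](p⋆[Δ]q)) := by rw [map_comp_tensorConv, hs]
    _ = midMap k s ∘ₗ map s s ∘ₗ midMap k s ∘ₗ ((p⋆[Δ]p)⋆[Δ](q⋆[Δ]q)) := by
        rw [midMap_comp_tensorConv hΔ hs]
    _ = midMap k s ∘ₗ map s s ∘ₗ midMap k s ∘ₗ map ΔA ΔB := by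
        rw [hpp, hqq, ← map_comp_tensorConv, hpq, comp_id]

lemma counitCompat_of_isCounitalCoassoc_tComul (hA : evalLeft εA ∘ₗ ΔA = LinearMap.id)
    (hB : evalRight εB ∘ₗ ΔB = LinearMap.id)
    (h : IsCounitalCoassoc k (tComul k ΔA ΔB s) (tCounit k εA εB)) :
    CounitCompat k εB εA s := by
  have hs : tensorConv (tComul k ΔA ΔB s) (evalLeft εA) (evalRight εB) = s :=
    tensorConv_evalLeft_evalRight hA hB
  have hl : evalLeft (εB ∘ₗ evalLeft εA) ∘ₗ tComul k ΔA ΔB s = LinearMap.id := by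
    rw [← tCounit_eq_comp_evalLeft]; exact h.1
  have hr : evalRight (εA ∘ₗ evalRight εB) ∘ₗ tComul k ΔA ΔB s = LinearMap.id := by
    rw [← tCounit_eq_comp_evalRight]; exact h.2.1
  rw [counitCompat_iff]
  constructor
  · rw [← hs, evalLeft_comp_tensorConv, hl, comp_id]
  · rw [← hs, evalRight_comp_tensorConv, hr, comp_id]

lemma comulCompat_of_isCounitalCoassoc_tComul (hA : IsCounitalCoassoc k ΔA εA)
    (hB : IsCounitalCoassoc k ΔB εB) (hs : CounitCompat k εB εA s)
    (hΔ : IsCoaction (tComul k ΔA ΔB s) (tComul k ΔA ΔB s)) :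
    ComulCompat k ΔB ΔA s := by
  obtain ⟨hAl, hAr, -⟩ := hA
  obtain ⟨hBl, hBr, -⟩ := hB
  obtain ⟨hsB, hsA⟩ := counitCompat_iff.mp hs
  exact comulCompat_of_tensorConv hΔ (tensorConv_evalRight_evalRight hBl hsB)
    (tensorConv_evalLeft_evalLeft hAr hsA) (tensorConv_evalRight_evalLeft hAr hBl hsA)
    (tensorConv_evalLeft_evalRight hAl hBr)

lemma evalLeft_tCounit_comp_tComul (hA : evalLeft εA ∘ₗ ΔA = LinearMap.id)
    (hB : evalLeft εB ∘ₗ ΔB = LinearMap.id) (hs : evalLeft εB ∘ₗ s = evalRight εB) :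
    evalLeft (tCounit k εA εB) ∘ₗ tComul k ΔA ΔB s = LinearMap.id := by
  rw [tCounit_eq_comp_evalRight, ← id_comp (evalLeft (εA ∘ₗ evalRight εB)), ← evalLeft_comp_map,
    comp_assoc, map_evalRight_id_comp_tComul hB hs, rTensorSplit, ← comp_assoc,
    evalLeft_comp_assoc, ← map_comp, hA, id_comp, map_id]

lemma evalRight_tCounit_comp_tComul (hA : evalRight εA ∘ₗ ΔA = LinearMap.id)
    (hB : evalRight εB ∘ₗ ΔB = LinearMap.id) (hs : evalRight εA ∘ₗ s = evalLeft εA) :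
    evalRight (tCounit k εA εB) ∘ₗ tComul k ΔA ΔB s = LinearMap.id := by
  rw [tCounit_eq_comp_evalLeft, ← id_comp (evalRight (εB ∘ₗ evalLeft εA)), ← evalRight_comp_map,
    comp_assoc, map_id_evalLeft_comp_tComul hA hs, ← map_evalRight_comp_assoc, comp_assoc,
    LinearEquiv.comp_symm_assoc, ← map_comp, hB, id_comp, map_id]

lemma midBCompat_of_comulCompat (hB : evalLeft εB ∘ₗ ΔB = LinearMap.id)
    (hs : evalLeft εB ∘ₗ s = evalRight εB) (h : ComulCompat k ΔB ΔA s) :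
    MidBCompat k ΔA s := by
  calc map id ΔA ∘ₗ s
      = map (evalLeft εB) id ∘ₗ map ΔB ΔA ∘ₗ s := by
        rw [map_comp_assoc, hB, id_comp]
    _ = rTensorPair A s ∘ₗ map (evalLeft εB) id ∘ₗ map s s ∘ₗ tComul k ΔA ΔB s := by
        rw [h, ← comp_assoc, map_evalLeft_id_comp_midMap, comp_assoc, tComul]
    _ = rTensorPair A s ∘ₗ map id s ∘ₗ map (evalRight εB) id ∘ₗ tComul k ΔA ΔB s := by
        rw [map_comp_assoc, map_comp_assoc, hs, id_comp, id_comp, comp_id]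
    _ = rTensorPair A s ∘ₗ map id s ∘ₗ rTensorSplit B ΔA := by
        rw [map_evalRight_id_comp_tComul hB hs]

lemma midACompat_of_comulCompat (hA : evalRight εA ∘ₗ ΔA = LinearMap.id)
    (hs : evalRight εA ∘ₗ s = evalLeft εA) (h : ComulCompat k ΔB ΔA s) :
    MidACompat k ΔB s := by
  calc map ΔB id ∘ₗ s
      = map id (evalRight εA) ∘ₗ map ΔB ΔA ∘ₗ s := by
        rw [map_comp_assoc, hA, id_comp]
    _ = (TensorProduct.assoc k B B A).symm.toLinearMap ∘ₗ map id s ∘ₗ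
          (TensorProduct.assoc k B A B).toLinearMap ∘ₗ map id (evalRight εA) ∘ₗ map s s ∘ₗ
            tComul k ΔA ΔB s := by
        rw [h, ← comp_assoc, map_id_evalRight_comp_midMap, tComul]
        simp only [comp_assoc]
    _ = (TensorProduct.assoc k B B A).symm.toLinearMap ∘ₗ map id s ∘ₗ
          (TensorProduct.assoc k B A B).toLinearMap ∘ₗ map s id ∘ₗ map id (evalLeft εA) ∘ₗ
            tComul k ΔA ΔB s := by
        rw [map_comp_assoc, map_comp_assoc, hs, id_comp, id_comp, comp_id]
    _ = (TensorProduct.assoc k B B A).symm.toLinearMap ∘ₗ map id s ∘ₗ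
          (TensorProduct.assoc k B A B).toLinearMap ∘ₗ map s id ∘ₗ
            (TensorProduct.assoc k A B B).symm.toLinearMap ∘ₗ map id ΔB := by
        rw [map_id_evalLeft_comp_tComul hA hs]

lemma MidBCompat.map_rTensorSplit_comp_rTensorPair (h : MidBCompat k ΔA s) (X : Type*)
    [AddCommGroup X] [Module k X] :
    map id (rTensorSplit X ΔA) ∘ₗ rTensorPair X s =
      rTensorPair (A ⊗[k] X) s ∘ₗ map id (rTensorPair X s) ∘ₗ rTensorSplit (B ⊗[k] X) ΔA := by
  have h' : map id ΔA ∘ₗ s = rTensorPair A s ∘ₗ map id s ∘ₗ rTensorSplit B ΔA := h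
  calc map id (rTensorSplit X ΔA) ∘ₗ rTensorPair X s
      = map id (TensorProduct.assoc k A A X).toLinearMap ∘ₗ
          rTensorSplit X (rTensorPair A s ∘ₗ map id s ∘ₗ rTensorSplit B ΔA) ∘ₗ
            (TensorProduct.assoc k A B X).symm.toLinearMap := by
        rw [rTensorPair, ← comp_assoc, map_rTensorSplit_comp_rTensorSplit, h', comp_assoc]
    _ = rTensorPair (A ⊗[k] X) s ∘ₗ map id (rTensorSplit X s) ∘ₗ
          rTensorSplit X (rTensorSplit B ΔA) ∘ₗ
            (TensorProduct.assoc k A B X).symm.toLinearMap := by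
        rw [← comp_assoc, ← rTensorPair_comp_map_assoc, ← map_rTensorSplit_comp_rTensorSplit]
        simp only [comp_assoc]
    _ = rTensorPair (A ⊗[k] X) s ∘ₗ map id (rTensorPair X s) ∘ₗ rTensorSplit (B ⊗[k] X) ΔA := by
        rw [rTensorSplit_comp_assoc_symm, rTensorPair.eq_def X, map_comp_assoc, id_comp]

lemma map_assoc_comp_rTensorSplit_twistedCoaction (X : Type*) [AddCommGroup X] [Module k X] :
    map id (TensorProduct.assoc k A B X).toLinearMap ∘ₗ rTensorSplit X (twistedCoaction ΔB s) ∘ₗ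
        (TensorProduct.assoc k A B X).symm.toLinearMap =
      rTensorPair (B ⊗[k] X) s ∘ₗ map id (rTensorSplit X ΔB) := by
  rw [twistedCoaction, ← comp_assoc, ← rTensorPair_comp_map_assoc]
  simp only [rTensorSplit, coassoc_simps]

lemma MidACompat.rTensorSplit_comp_rTensorPair (h : MidACompat k ΔB s) (X : Type*)
    [AddCommGroup X] [Module k X] :
    rTensorSplit (A ⊗[k] X) ΔB ∘ₗ rTensorPair X s =
      map id (rTensorPair X s) ∘ₗ rTensorPair (B ⊗[k] X) s ∘ₗ map id (rTensorSplit X ΔB) := by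
  have h' : rTensorSplit A ΔB ∘ₗ s = map id s ∘ₗ rTensorPair B s ∘ₗ map id ΔB := by
    rw [rTensorSplit, comp_assoc, h, LinearEquiv.comp_symm_assoc]
    rfl
  calc rTensorSplit (A ⊗[k] X) ΔB ∘ₗ rTensorPair X s
      = map id (TensorProduct.assoc k B A X).toLinearMap ∘ₗ
          rTensorSplit X (map id s ∘ₗ rTensorPair B s ∘ₗ map id ΔB) ∘ₗ
            (TensorProduct.assoc k A B X).symm.toLinearMap := by
        rw [rTensorPair, ← comp_assoc, rTensorSplit_comp_rTensorSplit, h', comp_assoc]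
    _ = map id (rTensorSplit X s) ∘ₗ rTensorSplit X (rTensorPair B s ∘ₗ map id ΔB) ∘ₗ
          (TensorProduct.assoc k A B X).symm.toLinearMap := by
        rw [← comp_assoc, ← map_rTensorSplit_comp_rTensorSplit, comp_assoc]
    _ = map id (rTensorPair X s) ∘ₗ map id (TensorProduct.assoc k A B X).toLinearMap ∘ₗ
          rTensorSplit X (twistedCoaction ΔB s) ∘ₗ
            (TensorProduct.assoc k A B X).symm.toLinearMap := by
        rw [rTensorPair.eq_def X, twistedCoaction]
        simp only [coassoc_simps]
    _ = map id (rTensorPair X s) ∘ₗ rTensorPair (B ⊗[k] X) s ∘ₗ map id (rTensorSplit X ΔB) := by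
        rw [map_assoc_comp_rTensorSplit_twistedCoaction]

lemma isCoaction_twistedCoaction (hB : IsCoaction ΔB ΔB) (h : MidACompat k ΔB s) :
    IsCoaction ΔB (twistedCoaction ΔB s) := by
  rw [isCoaction_iff] at hB ⊢
  calc rTensorSplit (A ⊗[k] B) ΔB ∘ₗ twistedCoaction ΔB s
      = map id (rTensorPair B s) ∘ₗ rTensorPair (B ⊗[k] B) s ∘ₗ
          map id (rTensorSplit B ΔB ∘ₗ ΔB) := by
        rw [twistedCoaction, ← comp_assoc, h.rTensorSplit_comp_rTensorPair, comp_assoc, comp_assoc,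
          ← map_comp, id_comp]
    _ = map id (rTensorPair B s) ∘ₗ (rTensorPair (B ⊗[k] B) s ∘ₗ map id (map id ΔB)) ∘ₗ
          map id ΔB := by
        rw [hB, comp_assoc, ← map_comp, id_comp]
    _ = map id (twistedCoaction ΔB s) ∘ₗ twistedCoaction ΔB s := by
        rw [rTensorPair_comp_map, comp_assoc, map_comp_assoc, id_comp]
        rfl

lemma MidBCompat.map_rTensorSplit_comp_twistedCoaction (h : MidBCompat k ΔA s) :
    map id (rTensorSplit B ΔA) ∘ₗ twistedCoaction ΔB s =
      rTensorPair (A ⊗[k] B) s ∘ₗ map id (twistedCoaction ΔB s) ∘ₗ rTensorSplit B ΔA := by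
  rw [twistedCoaction, ← comp_assoc, h.map_rTensorSplit_comp_rTensorPair, comp_assoc, comp_assoc,
    rTensorSplit_comp_map, map_comp_assoc, id_comp]

lemma rTensorSplit_tComul_comp_assoc_symm (V : Type*) [AddCommGroup V] [Module k V] :
    rTensorSplit V (tComul k ΔA ΔB s) ∘ₗ (TensorProduct.assoc k A B V).symm.toLinearMap =
      (TensorProduct.assoc k A B ((A ⊗[k] B) ⊗[k] V)).symm.toLinearMap ∘ₗ
        map id (map id (TensorProduct.assoc k A B V).symm.toLinearMap ∘ₗ
          rTensorPair (B ⊗[k] V) s ∘ₗ map id (rTensorSplit V ΔB)) ∘ₗ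
            rTensorSplit (B ⊗[k] V) ΔA := by
  have cancel : rTensorSplit V (twistedCoaction ΔB s) ∘ₗ
      (TensorProduct.assoc k A B V).symm.toLinearMap =
        map id (TensorProduct.assoc k A B V).symm.toLinearMap ∘ₗ
          rTensorPair (B ⊗[k] V) s ∘ₗ map id (rTensorSplit V ΔB) := by
    rw [← map_assoc_comp_rTensorSplit_twistedCoaction, map_comp_assoc,
      LinearEquiv.symm_comp, id_comp, map_id, id_comp]
  rw [tComul_eq, rTensorSplit_assoc_symm_comp, ← map_rTensorSplit_comp_rTensorSplit, comp_assoc,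
    comp_assoc, rTensorSplit_comp_assoc_symm, map_comp_assoc, id_comp, cancel]

lemma isCoaction_tComul {V : Type*} [AddCommGroup V] [Module k V] {l : V →ₗ[k] A ⊗[k] V}
    {r : V →ₗ[k] B ⊗[k] V} (hl : IsCoaction ΔA l) (hr : IsCoaction ΔB r)
    (h : map id l ∘ₗ r = rTensorPair V s ∘ₗ map id r ∘ₗ l) :
    IsCoaction (tComul k ΔA ΔB s)
      ((TensorProduct.assoc k A B V).symm.toLinearMap ∘ₗ map id r ∘ₗ l) := by
  rw [isCoaction_iff] at hl hr ⊢
  have hA : rTensorSplit (B ⊗[k] V) ΔA ∘ₗ map id r ∘ₗ l = map id (map id r ∘ₗ l) ∘ₗ l := by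
    rw [← comp_assoc, rTensorSplit_comp_map, comp_assoc, hl, map_comp_assoc, id_comp]
  have hB : rTensorPair (B ⊗[k] V) s ∘ₗ map id (rTensorSplit V ΔB) ∘ₗ map id r ∘ₗ l =
      map id (map id r ∘ₗ l) ∘ₗ r := by
    calc rTensorPair (B ⊗[k] V) s ∘ₗ map id (rTensorSplit V ΔB) ∘ₗ map id r ∘ₗ l
        = (rTensorPair (B ⊗[k] V) s ∘ₗ map id (map id r)) ∘ₗ map id r ∘ₗ l := by
          rw [map_comp_assoc, hr, comp_assoc, map_comp_assoc]
      _ = map id (map id r) ∘ₗ map id l ∘ₗ r := by rw [rTensorPair_comp_map, comp_assoc, h]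
      _ = map id (map id r ∘ₗ l) ∘ₗ r := by rw [map_comp_assoc, id_comp]
  calc rTensorSplit V (tComul k ΔA ΔB s) ∘ₗ
        (TensorProduct.assoc k A B V).symm.toLinearMap ∘ₗ map id r ∘ₗ l
      = (TensorProduct.assoc k A B ((A ⊗[k] B) ⊗[k] V)).symm.toLinearMap ∘ₗ
          map id (map id (TensorProduct.assoc k A B V).symm.toLinearMap ∘ₗ
            rTensorPair (B ⊗[k] V) s ∘ₗ map id (rTensorSplit V ΔB) ∘ₗ map id r ∘ₗ l) ∘ₗ l := by
        rw [← comp_assoc, rTensorSplit_tComul_comp_assoc_symm]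
        simp only [comp_assoc, hA, map_comp_assoc, id_comp]
    _ = (TensorProduct.assoc k A B ((A ⊗[k] B) ⊗[k] V)).symm.toLinearMap ∘ₗ
          map id (map id ((TensorProduct.assoc k A B V).symm.toLinearMap ∘ₗ map id r ∘ₗ l)) ∘ₗ
            map id r ∘ₗ l := by
        rw [hB, map_comp_assoc, map_comp_assoc, id_comp, id_comp]
    _ = map id ((TensorProduct.assoc k A B V).symm.toLinearMap ∘ₗ map id r ∘ₗ l) ∘ₗ
          (TensorProduct.assoc k A B V).symm.toLinearMap ∘ₗ map id r ∘ₗ l := by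
        rw [← map_map_comp_assoc_symm_eq_assoc, map_id]

lemma isCoaction_tComul_self (hA : IsCoaction ΔA ΔA) (hB : IsCoaction ΔB ΔB)
    (h₁ : MidACompat k ΔB s) (h₂ : MidBCompat k ΔA s) :
    IsCoaction (tComul k ΔA ΔB s) (tComul k ΔA ΔB s) := by
  have h := isCoaction_tComul (hA.rTensorSplit B) (isCoaction_twistedCoaction hB h₁)
    h₂.map_rTensorSplit_comp_twistedCoaction
  rwa [← tComul_eq] at h

end TwistedCoproduct

end TTP

open TTP in
theorem twistedTensorProduct_isCounitalCoassoc_iff_general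
    {k A B : Type*} [Field k]
    [AddCommGroup A] [Module k A] [AddCommGroup B] [Module k B]
    {comulA : A →ₗ[k] A ⊗[k] A} {counitA : A →ₗ[k] k}
    {comulB : B →ₗ[k] B ⊗[k] B} {counitB : B →ₗ[k] k}
    (hA : IsCounitalCoassoc k comulA counitA) (hB : IsCounitalCoassoc k comulB counitB)
    (s : A ⊗[k] B →ₗ[k] B ⊗[k] A) :
    IsCounitalCoassoc k (tComul k comulA comulB s) (tCounit k counitA counitB)
      ↔ (CounitCompat k counitB counitA s ∧ ComulCompat k comulB comulA s) := by
  constructor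
  · intro h
    have hs := counitCompat_of_isCounitalCoassoc_tComul hA.1 hB.2.1 h
    exact ⟨hs, comulCompat_of_isCounitalCoassoc_tComul hA hB hs h.2.2⟩
  · rintro ⟨hs, hΔ⟩
    obtain ⟨hsB, hsA⟩ := counitCompat_iff.mp hs
    exact ⟨evalLeft_tCounit_comp_tComul hA.1 hB.1 hsB,
      evalRight_tCounit_comp_tComul hA.2.1 hB.2.1 hsA,
      isCoaction_tComul_self hA.2.2 hB.2.2 (midACompat_of_comulCompat hA.2.1 hsA hΔ)
        (midBCompat_of_comulCompat hB.1 hsB hΔ)⟩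

open TTP in
/-- the induced comultiplication and counit make `A ⊗ B` a counital
coassociative coalgebra if and only if `τ` is compatible with the counits and
with the comultiplications. -/
theorem twistedTensorProduct_isCounitalCoassoc_iff
    {k A B : Type*} [Field k]
    [AddCommGroup A] [Module k A] [AddCommGroup B] [Module k B]
    (comulA : A →ₗ[k] A ⊗[k] A) (counitA : A →ₗ[k] k)
    (comulB : B →ₗ[k] B ⊗[k] B) (counitB : B →ₗ[k] k)
    (hA : IsCounitalCoassoc k comulA counitA) (hB : IsCounitalCoassoc k comulB counitB)
    (τ : B ⊗[k] A ≃ₗ[k] A ⊗[k] B) :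
    IsCounitalCoassoc k (tComul k comulA comulB τ.symm.toLinearMap)
        (tCounit k counitA counitB)
      ↔ (CounitCompat k counitA counitB τ.toLinearMap
          ∧ ComulCompat k comulA comulB τ.toLinearMap) := by
  rw [twistedTensorProduct_isCounitalCoassoc_iff_general hA hB, counitCompat_symm, comulCompat_symm]
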